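/- Let G be a finite group acting linearly on the sphere S^n (n ≥ 1) via an orthogonal representation ρ : G → O(n+1), suppose S^n is G-connected and (S^n)^G ≠ ∅. Then 2 ≤ TC^G(S^n) ≤ 3. -/

import Mathlib

open Set unitInterval

namespace PaperTC

variable {G X : Type*}

/-- The orbit of `x` under the action `act`. -/
def orbit (act : G → X → X) (x : X) : Set X := {y | ∃ g, act g x = y}

/-- The fixed point set of the action `act`. -/
def fixedSet (act : G → X → X) : Set X := {x | ∀ g, act g x = x}

/-- The fixed point set of a subset `S` of the acting group. -/
def fixedSetOf (act : G → X → X) (S : Set G) : Set X := {x | ∀ g ∈ S, act g x = x}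

/-- `minCover P` is the least `k ≥ 1` satisfying `P k`, as an element of `ℕ∞`
(equal to `∞` if there is no such `k`). -/
noncomputable def minCover (P : ℕ → Prop) : ℕ∞ :=
  sInf {k : ℕ∞ | ∃ m : ℕ, k = m ∧ 1 ≤ m ∧ P m}

section Plain

variable (Y : Type*) [TopologicalSpace Y]

/-- `Y × Y` can be covered by `k` open sets each admitting a motion planner. -/
def TCcover (k : ℕ) : Prop :=
  ∃ U : Fin k → Set (Y × Y),
    (∀ i, IsOpen (U i)) ∧ (⋃ i, U i) = univ ∧
    ∀ i, ∃ s : Y × Y → C(I, Y),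
      ContinuousOn s (U i) ∧ ∀ p ∈ U i, s p 0 = p.1 ∧ s p 1 = p.2

/-- Topological complexity (non-reduced, possibly infinite). -/
noncomputable def TC : ℕ∞ := minCover (TCcover Y)

/-- `Y` can be covered by `k` open sets, each of which can be deformed within `Y`
to a point. -/
def catCover (k : ℕ) : Prop :=
  ∃ U : Fin k → Set Y,
    (∀ i, IsOpen (U i)) ∧ (⋃ i, U i) = univ ∧
    ∀ i, ∃ H : Y × I → Y,
      ContinuousOn H (U i ×ˢ (univ : Set I)) ∧ (∀ x ∈ U i, H (x, 0) = x) ∧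
      ∃ y₀, ∀ x ∈ U i, H (x, 1) = y₀

/-- Non-reduced Lusternik–Schnirelmann category. -/
noncomputable def cat : ℕ∞ := minCover (catCover Y)

end Plain

section Equivariant

variable [TopologicalSpace X] (act : G → X → X)

/-- `X × X` can be covered by `k` invariant open sets each admitting an
equivariant motion planner. -/
def eqTCcover (k : ℕ) : Prop :=
  ∃ U : Fin k → Set (X × X),
    (∀ i, IsOpen (U i)) ∧ (⋃ i, U i) = univ ∧
    ∀ i, (∀ g p, p ∈ U i → (act g p.1, act g p.2) ∈ U i) ∧
      ∃ s : X × X → C(I, X),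
        ContinuousOn s (U i) ∧
        (∀ p ∈ U i, s p 0 = p.1 ∧ s p 1 = p.2) ∧
        (∀ g p, p ∈ U i → ∀ t : I, s (act g p.1, act g p.2) t = act g (s p t))

/-- Equivariant topological complexity `TC_G` of Colman and Grant. -/
noncomputable def eqTC : ℕ∞ := minCover (eqTCcover act)

/-- `X × X` can be covered by `k` `(G × G)`-invariant open sets, each admitting a
`(G × G)`-equivariant section of `π^G : P X ×_{X/G} P X → X × X`; such a section is
recorded by a pair of paths `s₁ p`, `s₂ p`, with the orbit of the endpoint of the first
equal to the orbit of the starting point of the second. -/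
def invTCcover (k : ℕ) : Prop :=
  ∃ U : Fin k → Set (X × X),
    (∀ i, IsOpen (U i)) ∧ (⋃ i, U i) = univ ∧
    ∀ i, (∀ g₁ g₂ : G, ∀ p, p ∈ U i → (act g₁ p.1, act g₂ p.2) ∈ U i) ∧
      ∃ s₁ s₂ : X × X → C(I, X),
        ContinuousOn s₁ (U i) ∧ ContinuousOn s₂ (U i) ∧
        (∀ p ∈ U i, s₁ p 0 = p.1 ∧ s₂ p 1 = p.2 ∧
          orbit act (s₁ p 1) = orbit act (s₂ p 0)) ∧
        (∀ g₁ g₂ : G, ∀ p, p ∈ U i → ∀ t : I,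
          s₁ (act g₁ p.1, act g₂ p.2) t = act g₁ (s₁ p t) ∧
          s₂ (act g₁ p.1, act g₂ p.2) t = act g₂ (s₂ p t))

/-- Invariant topological complexity `TC^G` of Lubawski and Marzantowicz. -/
noncomputable def invTC : ℕ∞ := minCover (invTCcover act)

/-- The invariant open set `U` is `G`-compressible into `A`: the inclusion `U ↪ X` is
`G`-equivariantly homotopic to a `G`-map with values in `A`. -/
def GCompressible (A : Set X) (U : Set X) : Prop :=
  (∀ g x, x ∈ U → act g x ∈ U) ∧
  ∃ H : X × I → X,
    ContinuousOn H (U ×ˢ (univ : Set I)) ∧ (∀ x ∈ U, H (x, 0) = x) ∧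
    (∀ g x, x ∈ U → ∀ t : I, H (act g x, t) = act g (H (x, t))) ∧
    (∀ x ∈ U, H (x, 1) ∈ A)

/-- A `G`-categorical set: compressible into a single orbit. -/
def GCategorical (U : Set X) : Prop :=
  ∃ x₀ : X, GCompressible act (orbit act x₀) U

/-- `X` can be covered by `k` open `G`-categorical sets. -/
def catGCover (k : ℕ) : Prop :=
  ∃ U : Fin k → Set X,
    (∀ i, IsOpen (U i)) ∧ (⋃ i, U i) = univ ∧ ∀ i, GCategorical act (U i)

/-- Equivariant Lusternik–Schnirelmann category `cat_G`. -/
noncomputable def catG : ℕ∞ := minCover (catGCover act)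

/-- `X` can be covered by `k` open sets `G`-compressible into `{star}`. -/
def pointedCatGCover (star : X) (k : ℕ) : Prop :=
  ∃ U : Fin k → Set X,
    (∀ i, IsOpen (U i)) ∧ (⋃ i, U i) = univ ∧
    ∀ i, GCompressible act {star} (U i)

/-- The pointed equivariant category `_{{⋆}}cat_G(X)`. -/
noncomputable def pointedCatG (star : X) : ℕ∞ := minCover (pointedCatGCover act star)

/-- `X` is `G`-contractible: the identity is `G`-homotopic to a map with values in a
single orbit. -/
def GContractible : Prop :=
  ∃ H : X × I → X,
    Continuous H ∧ (∀ x, H (x, 0) = x) ∧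
    (∀ g x, ∀ t : I, H (act g x, t) = act g (H (x, t))) ∧
    ∃ x₀ : X, ∀ x, H (x, 1) ∈ orbit act x₀

end Equivariant

/-- The orbit space `X/G` with the quotient topology. -/
abbrev OrbitSpace (act : G → X → X) : Type _ := Quot (fun x y => ∃ g, act g x = y)

end PaperTC
namespace PaperTC

/-- The unit sphere `S^n ⊆ ℝ^{n+1}` (with the Euclidean metric). -/
abbrev Sph (n : ℕ) : Set (EuclideanSpace ℝ (Fin (n + 1))) := Metric.sphere 0 1

/-- The action of `G` on the unit sphere `S^n` obtained by restricting an orthogonal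
representation of `G` on `ℝ^{n+1}`. -/
noncomputable def sphereAct {G : Type*} [Monoid G] {n : ℕ}
    (ρ : G →* (EuclideanSpace ℝ (Fin (n + 1)) ≃ₗᵢ[ℝ] EuclideanSpace ℝ (Fin (n + 1)))) :
    G → ↥(Sph n) → ↥(Sph n) := fun g x =>
  ⟨ρ g x, mem_sphere_zero_iff_norm.mpr (by
    rw [(ρ g).norm_map]; exact mem_sphere_zero_iff_norm.mp x.2)⟩

end PaperTC

open PaperTC

/-!
For the upper bound, fix a fixed point `e`. Pushing along great circles compresses the complement
of `-e` equivariantly into `e`, and the complement of `e` into `-e`, from where a path of fixed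
points leads to `e`. Two disjoint balls around `e` and `-e` can be compressed simultaneously, and
two points that do not lie together in one of the two complements both belong to `{e, -e}`, so
they lie in these balls.

For the lower bound, a global equivariant motion planner restricted to pairs `(x, e)` with `x`
fixed moves through fixed points, where orbits are singletons, so it contracts the fixed point
set. That set is the unit sphere of the subspace of fixed vectors, and unit spheres are not
contractible: otherwise there would be a `C¹` retraction `r` of the ball onto its sphere.
Following Milnor and Rogers, the integral over the ball of the Jacobian of `x ↦ x + t (r x - x)`
is a polynomial in `t`. For small `t > 0` the map is a bijection of the ball, so the polynomial is
constantly the volume of the ball, yet it vanishes at `t = 1`, because `r` has singular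
derivative.
-/

namespace PaperTC

open MeasureTheory Metric Filter Topology

section VolumePolynomial

open Polynomial

theorem exists_polynomial_eval_eq_integral {α : Type*} [MeasurableSpace α] {μ : Measure α} {n : ℕ}
    {p : α → ℝ[X]} (hdeg : ∀ x, (p x).natDegree ≤ n)
    (hint : ∀ t, Integrable (fun x => (p x).eval t) μ) :
    ∃ q : ℝ[X], ∀ t, q.eval t = ∫ x, (p x).eval t ∂μ := by
  let nodes := Finset.range (n + 1)
  let v : ℕ → ℝ := fun i => i
  have hinterp (x : α) (t : ℝ) :
      (p x).eval t = ∑ i ∈ nodes, (p x).eval (v i) * (Lagrange.basis nodes v i).eval t := by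
    have hlt : (p x).degree < nodes.card := by
      rw [Finset.card_range]
      exact degree_le_natDegree.trans_lt (by exact_mod_cast Nat.lt_succ_of_le (hdeg x))
    conv_lhs => rw [Lagrange.eq_interpolate (Nat.cast_injective.injOn (s := nodes)) hlt]
    simp only [Lagrange.interpolate_apply, eval_finsetSum, eval_mul, eval_C, v]
  refine ⟨Lagrange.interpolate nodes v fun i => ∫ x, (p x).eval (v i) ∂μ, fun t => ?_⟩
  simp only [hinterp _ t, Lagrange.interpolate_apply, eval_finsetSum, eval_mul, eval_C]
  rw [integral_finsetSum _ fun i _ => (hint (v i)).mul_const _]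
  simp only [integral_mul_const]

variable {E : Type*} [NormedAddCommGroup E] [NormedSpace ℝ E]

theorem continuous_det_one_add_smul {A : E → E →L[ℝ] E} (hA : Continuous A) :
    Continuous fun z : ℝ × E => (1 + z.1 • A z.2 : E →L[ℝ] E).det :=
  ContinuousLinearMap.continuous_det.comp (by fun_prop)

theorem eventually_det_one_add_smul_pos {A : E → E →L[ℝ] E} (hA : Continuous A) {s : Set E}
    (hs : IsCompact s) : ∀ᶠ t : ℝ in 𝓝 0, ∀ x ∈ s, 0 < (1 + t • A x : E →L[ℝ] E).det := by
  refine hs.eventually_forall_of_forall_eventually fun x _ =>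
    (continuous_det_one_add_smul hA).continuousAt.eventually (lt_mem_nhds ?_)
  simp [ContinuousLinearMap.det]

variable [FiniteDimensional ℝ E]

theorem exists_polynomial_eval_eq_det_one_add_smul (A : E →L[ℝ] E) :
    ∃ p : ℝ[X], p.natDegree ≤ Module.finrank ℝ E ∧
      ∀ t : ℝ, p.eval t = (1 + t • A : E →L[ℝ] E).det := by
  let b := Module.finBasis ℝ E
  let M := LinearMap.toMatrix b b (A : E →ₗ[ℝ] E)
  refine ⟨_, by simpa using natDegree_det_X_add_C_le M 1, fun t => ?_⟩
  have hdet : (1 + t • A : E →L[ℝ] E).det = (1 + t • M).det := by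
    rw [ContinuousLinearMap.det, ← LinearMap.det_toMatrix b]
    simp [M, LinearMap.toMatrix_one]
  rw [hdet, ← coe_evalRingHom, RingHom.map_det]
  congr 1
  ext i j
  simp [Matrix.one_apply, add_comm, mul_comm t, apply_ite (eval t)]

variable [MeasurableSpace E] [BorelSpace E]

theorem integral_det_one_add_smul_eq_of_eventually_eq {μ : Measure E} [IsFiniteMeasureOnCompacts μ]
    {A : E → E →L[ℝ] E} (hA : Continuous A) {s : Set E} (hs : IsCompact s) {c : ℝ}
    (hc : ∀ᶠ t : ℝ in 𝓝[>] 0, ∫ x in s, (1 + t • A x : E →L[ℝ] E).det ∂μ = c) (t : ℝ) :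
    ∫ x in s, (1 + t • A x : E →L[ℝ] E).det ∂μ = c := by
  choose p hdeg heval using fun x => exists_polynomial_eval_eq_det_one_add_smul (A x)
  have hint (t : ℝ) : IntegrableOn (fun x => (p x).eval t) s μ := by
    simp only [heval]
    exact ((continuous_det_one_add_smul hA).comp (.prodMk_right t)).continuousOn
      |>.integrableOn_compact hs
  obtain ⟨q, hq⟩ := exists_polynomial_eval_eq_integral hdeg hint
  simp only [heval] at hq
  obtain ⟨ε, hε, hsmall⟩ := mem_nhdsGT_iff_exists_Ioo_subset.mp hc
  have hqc : q = C c := eq_of_infinite_eval_eq q (C c) <|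
    (Ioo_infinite hε).mono fun t ht => by
      rw [mem_ofPred_eq, hq, eval_C]
      exact hsmall ht
  rw [← hq, hqc, eval_C]

theorem integral_det_eq_measureReal_of_image_eq {μ : Measure E} [μ.IsAddHaarMeasure] {s : Set E}
    (hs : MeasurableSet s) {f : E → E} {f' : E → E →L[ℝ] E}
    (hf' : ∀ x ∈ s, HasFDerivWithinAt f (f' x) s x) (hinj : InjOn f s) (himage : f '' s = s)
    (hpos : ∀ x ∈ s, 0 ≤ (f' x).det) : ∫ x in s, (f' x).det ∂μ = μ.real s := by
  calc ∫ x in s, (f' x).det ∂μ = ∫ x in s, |(f' x).det| • (1 : ℝ) ∂μ :=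
        setIntegral_congr_fun hs fun x hx => by simp [abs_of_nonneg (hpos x hx)]
    _ = ∫ x in f '' s, 1 ∂μ :=
        (integral_image_eq_integral_abs_det_fderiv_smul μ hs hf' hinj fun _ => 1).symm
    _ = μ.real s := by simp [himage]

end VolumePolynomial

section Perturbation

theorem inter_frontier_nonempty_of_isPreconnected {X : Type*} [TopologicalSpace X] {s t : Set X}
    (ht : IsPreconnected t) (hs : IsClosed s) (hts : (t ∩ s).Nonempty)
    (hts' : (t ∩ sᶜ).Nonempty) : (t ∩ frontier s).Nonempty := by
  by_contra hempty
  have hint : t ∩ s ⊆ interior s := fun x hx => by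
    by_contra hx'
    exact hempty ⟨x, hx.1, subset_closure hx.2, hx'⟩
  obtain ⟨z, -, hz, hz'⟩ := ht (interior s) sᶜ isOpen_interior hs.isOpen_compl
    (fun x hx => (em (x ∈ s)).imp (fun hxs => hint ⟨hx, hxs⟩) id)
    (hts.mono fun x hx => ⟨hx.1, hint hx⟩) hts'
  exact hz' (interior_subset hz)

variable {E F : Type*} [NormedAddCommGroup E] [NormedSpace ℝ E] [NormedAddCommGroup F]

theorem lipschitzWith_indicator {s : Set E} (hs : IsClosed s) {K : NNReal} {u : E → F}
    (hu : LipschitzOnWith K u s) (hzero : ∀ x ∈ frontier s, u x = 0) :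
    LipschitzWith K (s.indicator u) := by
  have hcross {x y : E} (hx : x ∈ s) (hy : y ∉ s) : ‖u x‖ ≤ K * dist x y := by
    obtain ⟨z, hz, hzs⟩ := inter_frontier_nonempty_of_isPreconnected
      (convex_segment x y).isPreconnected hs ⟨x, left_mem_segment ℝ x y, hx⟩
      ⟨y, right_mem_segment ℝ x y, hy⟩
    calc ‖u x‖ = dist (u x) (u z) := by rw [hzero z hzs, dist_zero_right]
      _ ≤ K * dist x z := hu.dist_le_mul x hx z (hs.frontier_subset hzs)
      _ ≤ K * dist x y := by
          gcongr
          linarith [dist_add_dist_of_mem_segment hz, dist_nonneg (x := z) (y := y)]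
  refine LipschitzWith.of_dist_le_mul fun x y => ?_
  by_cases hx : x ∈ s <;> by_cases hy : y ∈ s
  · simpa only [indicator_of_mem, hx, hy] using hu.dist_le_mul x hx y hy
  · simpa [hx, hy] using hcross hx hy
  · simpa [hx, hy, dist_comm x y] using hcross hy hx
  · simpa [hx, hy] using mul_nonneg K.2 dist_nonneg

theorem bijective_id_add_of_lipschitzWith [CompleteSpace E] {K : NNReal} (hK : K < 1)
    {w : E → E} (hw : LipschitzWith K w) : Function.Bijective fun x => x + w x := by
  have happrox : ApproximatesLinearOn (fun x => x + w x)
      ((ContinuousLinearEquiv.refl ℝ E : E ≃L[ℝ] E) : E →L[ℝ] E) univ K := by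
    rw [ApproximatesLinearOn.approximatesLinearOn_iff_lipschitzOnWith, lipschitzOnWith_univ]
    simpa [Function.comp_def, Pi.sub_def] using hw
  have hK' : Subsingleton E ∨
      K < ‖((ContinuousLinearEquiv.refl ℝ E : E ≃L[ℝ] E).symm : E →L[ℝ] E)‖₊⁻¹ := by
    obtain hE | hE := subsingleton_or_nontrivial E
    · exact .inl hE
    · exact .inr (by simpa using hK)
  exact ⟨injOn_univ.mp (happrox.injOn hK'), happrox.surjective hK'⟩

theorem image_eq_self_of_surjective_of_mapsTo {α : Type*} {f : α → α} {s : Set α}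
    (hf : Function.Surjective f) (hs : MapsTo f s s) (hid : ∀ x ∉ s, f x = x) : f '' s = s := by
  refine hs.image_subset.antisymm fun y hy => ?_
  obtain ⟨x, rfl⟩ := hf y
  by_contra hx
  have hxs : x ∉ s := fun hxs => hx ⟨x, hxs, rfl⟩
  exact hxs (hid x hxs ▸ hy)

end Perturbation

section NoRetraction

variable {E : Type*} [NormedAddCommGroup E]

section Smooth

variable [NormedSpace ℝ E]

theorem eventually_bijOn_lineMap_of_eqOn_frontier [CompleteSpace E] {s : Set E} (hs : IsCompact s)
    (hconv : Convex ℝ s) {r : E → E} (hr : ContDiff ℝ 1 r) (hmaps : MapsTo r s s)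
    (hfrontier : EqOn r id (frontier s)) :
    ∀ᶠ t : ℝ in 𝓝[>] 0, BijOn (fun x => x + t • (r x - x)) s s := by
  obtain ⟨K, hK⟩ := (hr.sub contDiff_id).contDiffOn.exists_lipschitzOnWith one_ne_zero hconv hs
  have hw := lipschitzWith_indicator hs.isClosed hK fun x hx => sub_eq_zero.mpr (hfrontier hx)
  have hsmall : ∀ᶠ t : ℝ in 𝓝[>] 0, ‖t‖₊ * K < 1 := by
    have hcont : Continuous fun t : ℝ => ‖t‖₊ * K := by fun_prop
    exact nhdsWithin_le_nhds (hcont.continuousAt.eventually (gt_mem_nhds (by simp)))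
  filter_upwards [hsmall, Ioo_mem_nhdsGT one_pos] with t htK ht
  -- Extended by the identity off `s`, the map becomes a contractive perturbation of the identity
  -- of the whole space.
  let f : E → E := fun x => x + t • s.indicator (r - id) x
  have hfr : EqOn f (fun x => x + t • (r x - x)) s := fun x hx => by simp [f, hx]
  have hbij : Function.Bijective f :=
    bijective_id_add_of_lipschitzWith htK ((lipschitzWith_smul t).comp hw)
  have hmapsTo : MapsTo f s s := fun x hx => by
    rw [hfr hx]
    exact hconv.add_smul_sub_mem hx (hmaps hx) ⟨ht.1.le, ht.2.le⟩
  have himage : f '' s = s :=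
    image_eq_self_of_surjective_of_mapsTo hbij.surjective hmapsTo fun x hx => by simp [f, hx]
  exact BijOn.congr ⟨hmapsTo, hbij.injective.injOn, himage.ge⟩ hfr

variable [FiniteDimensional ℝ E]

theorem integral_det_fderiv_eq_measureReal_of_eqOn_frontier [MeasurableSpace E] [BorelSpace E]
    {μ : Measure E} [μ.IsAddHaarMeasure] {s : Set E} (hs : IsCompact s) (hconv : Convex ℝ s)
    {r : E → E} (hr : ContDiff ℝ 1 r) (hmaps : MapsTo r s s) (hfrontier : EqOn r id (frontier s)) :
    ∫ x in s, (fderiv ℝ r x).det ∂μ = μ.real s := by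
  have hA : Continuous fun x => fderiv ℝ r x - 1 :=
    (hr.continuous_fderiv one_ne_zero).sub continuous_const
  have hderiv (t : ℝ) (x : E) : HasFDerivAt (fun x => x + t • (r x - x))
      (1 + t • (fderiv ℝ r x - 1)) x :=
    (hasFDerivAt_id x).add
      (((hr.differentiable one_ne_zero x).hasFDerivAt.sub (hasFDerivAt_id x)).const_smul t)
  have hsmall : ∀ᶠ t : ℝ in 𝓝[>] 0,
      ∫ x in s, (1 + t • (fderiv ℝ r x - 1) : E →L[ℝ] E).det ∂μ = μ.real s := by
    filter_upwards [eventually_bijOn_lineMap_of_eqOn_frontier hs hconv hr hmaps hfrontier,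
      nhdsWithin_le_nhds (eventually_det_one_add_smul_pos hA hs)] with t hbij hpos
    exact integral_det_eq_measureReal_of_image_eq hs.measurableSet
      (fun x _ => (hderiv t x).hasFDerivWithinAt) hbij.injOn hbij.image_eq
      fun x hx => (hpos x hx).le
  simpa using integral_det_one_add_smul_eq_of_eventually_eq hA hs hsmall 1

end Smooth

variable [InnerProductSpace ℝ E] [FiniteDimensional ℝ E]

theorem det_fderiv_eq_zero_of_norm_eq_const {r : E → E} {x : E} (hr : DifferentiableAt ℝ r x)
    {c : ℝ} (hc : c ≠ 0) (hnorm : ∀ y, ‖r y‖ = c) : (fderiv ℝ r x).det = 0 := by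
  have horth (y : E) : inner ℝ (r x) (fderiv ℝ r x y) = 0 := by
    have hsq := hr.hasFDerivAt.norm_sq
    simp only [hnorm] at hsq
    simpa using DFunLike.congr_fun (hsq.unique (hasFDerivAt_const (c ^ 2) x)) y
  by_contra hdet
  obtain ⟨y, hy⟩ := (LinearMap.equivOfDetNeZero (fderiv ℝ r x : E →ₗ[ℝ] E) hdet).surjective (r x)
  have hy' : fderiv ℝ r x y = r x := hy
  have hself : inner ℝ (r x) (r x) = (0 : ℝ) := by simpa only [hy'] using horth y
  exact hc (by rw [← hnorm x, inner_self_eq_zero.mp hself, norm_zero])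

theorem exists_contDiff_retraction_sphere_of_continuous {F : E → E} (hF : Continuous F)
    {ε : ℝ} (hε : 0 < ε) (hlower : ∀ x, ε ≤ ‖F x‖) {R : ℝ} (hR : R < 1)
    (hid : ∀ x, R < ‖x‖ → F x = x) :
    ∃ r : E → E, ContDiff ℝ 1 r ∧ (∀ x, ‖r x‖ = 1) ∧ ∀ x, ‖x‖ = 1 → r x = x := by
  obtain ⟨g, hg, hgF, hgid, -⟩ := hF.exists_contDiff_approx_and_eqOn 1 (ε := fun _ => ε)
    continuous_const (fun _ => hε) (isClosed_le continuous_const continuous_norm)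
    ((isOpen_lt continuous_const continuous_norm).mem_nhdsSet.mpr
      fun x (hx : 1 ≤ ‖x‖) => hR.trans_le hx)
    (contDiffOn_id.congr hid)
  have hg0 (x : E) : g x ≠ 0 := fun hx => by
    have hdist := hgF x
    rw [hx, dist_zero_left] at hdist
    exact (hlower x).not_gt hdist
  have hg1 : ContDiff ℝ 1 g := by exact_mod_cast hg
  refine ⟨fun x => NormedSpace.normalize (g x),
    ((hg1.norm ℝ hg0).inv fun x => norm_ne_zero_iff.mpr (hg0 x)).smul hg1,
    fun x => NormedSpace.norm_normalize (hg0 x), fun x hx => ?_⟩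
  have hgx : g x = x := (hgid hx.ge).trans (hid x (hx ▸ hR))
  simp only [hgx, NormedSpace.normalize_eq_self_of_norm_eq_one hx]

theorem not_exists_contDiff_retraction_sphere :
    ¬ ∃ r : E → E, ContDiff ℝ 1 r ∧ (∀ x, ‖r x‖ = 1) ∧ ∀ x, ‖x‖ = 1 → r x = x := by
  rintro ⟨r, hr, hnorm, hid⟩
  borelize E
  have hvol := integral_det_fderiv_eq_measureReal_of_eqOn_frontier (μ := volume)
    (isCompact_closedBall (0 : E) 1) (convex_closedBall 0 1) hr (fun x _ => by simp [hnorm])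
    (fun x hx => hid x (by simpa [frontier_closedBall] using hx))
  have hdet (x : E) : (fderiv ℝ r x).det = 0 :=
    det_fderiv_eq_zero_of_norm_eq_const (hr.differentiable one_ne_zero x) one_ne_zero hnorm
  have hpos : 0 < volume.real (closedBall (0 : E) 1) :=
    ENNReal.toReal_pos (measure_closedBall_pos volume _ one_pos).ne' measure_closedBall_lt_top.ne
  simp only [hdet, integral_zero] at hvol
  exact hpos.ne hvol

theorem not_exists_retraction_closedBall_sphere :
    ¬ ∃ r : C(closedBall (0 : E) 1, sphere (0 : E) 1),
      Function.LeftInverse r (inclusion sphere_subset_closedBall) := by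
  rintro ⟨r, hr⟩
  let ballProj : E → closedBall (0 : E) 1 := fun v =>
    ⟨(max 1 ‖v‖)⁻¹ • v, by
      rw [mem_closedBall_zero_iff, norm_smul, norm_inv, Real.norm_of_nonneg (by positivity)]
      exact inv_mul_le_one_of_le₀ (le_max_right _ _) (by positivity)⟩
  have hballProj : Continuous ballProj := by
    refine (Continuous.smul (Continuous.inv₀ (by fun_prop) fun v => ?_) continuous_id).subtype_mk _
    positivity
  -- Squeezing `r` into the ball of radius `1 / 2` leaves room for `F` to be the identity near the
  -- unit sphere, so that smoothing `F` does not move the sphere.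
  let F : E → E := fun v => max (1 / 2) ‖v‖ • (r (ballProj ((2 : ℝ) • v)) : E)
  have hF : Continuous F := by fun_prop
  have hlower (v : E) : 1 / 2 ≤ ‖F v‖ := by
    simp only [F, norm_smul, norm_eq_of_mem_sphere, mul_one]
    exact (le_max_left _ _).trans (le_abs_self _)
  have hid (v : E) (hv : 1 / 2 < ‖v‖) : F v = v := by
    have hv0 : v ≠ 0 := by rintro rfl; norm_num at hv
    have hproj : ballProj ((2 : ℝ) • v) = inclusion sphere_subset_closedBall
        ⟨NormedSpace.normalize v, by simpa using hv0⟩ := by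
      ext1
      simp only [ballProj]
      rw [max_eq_right (by rw [norm_smul]; norm_num; linarith)]
      exact NormedSpace.normalize_smul_of_pos two_pos v
    simp only [F]
    rw [hproj, hr, max_eq_right hv.le, NormedSpace.norm_smul_normalize]
  exact not_exists_contDiff_retraction_sphere <|
    exists_contDiff_retraction_sphere_of_continuous hF one_half_pos hlower one_half_lt_one hid

end NoRetraction

section Contractible

variable {E : Type*} [NormedAddCommGroup E]

/-- Polar coordinates on the closed unit ball: `(t, x) ↦ t • x`. -/
def polarMap (E : Type*) [NormedAddCommGroup E] [NormedSpace ℝ E] :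
    C(I × sphere (0 : E) 1, closedBall (0 : E) 1) where
  toFun p := ⟨(p.1 : ℝ) • (p.2 : E), by simpa [norm_smul, abs_of_nonneg p.1.2.1] using p.1.2.2⟩

theorem polarMap_eq_polarMap [NormedSpace ℝ E] {p q : I × sphere (0 : E) 1}
    (h : polarMap E p = polarMap E q) : p.1 = q.1 ∧ (p.1 = 0 ∨ p.2 = q.2) := by
  obtain ⟨t, x⟩ := p
  obtain ⟨s, y⟩ := q
  have hsmul : (t : ℝ) • (x : E) = (s : ℝ) • (y : E) := congrArg Subtype.val h
  have hts : t = s := by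
    ext1
    simpa [norm_smul, abs_of_nonneg t.2.1, abs_of_nonneg s.2.1] using congrArg norm hsmul
  subst hts
  refine ⟨rfl, ?_⟩
  by_contra! hne
  exact hne.2 (Subtype.ext (smul_right_injective E (unitInterval.coe_ne_zero.mpr hne.1) hsmul))

theorem isQuotientMap_polarMap [NormedSpace ℝ E] [FiniteDimensional ℝ E] [Nontrivial E] :
    IsQuotientMap (polarMap E) := by
  refine IsQuotientMap.of_surjective_continuous ?_ (polarMap E).continuous
  rintro ⟨v, hv⟩
  have hv1 : ‖v‖ ≤ 1 := mem_closedBall_zero_iff.mp hv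
  obtain rfl | hv0 := eq_or_ne v 0
  · obtain ⟨x, hx⟩ := (NormedSpace.sphere_nonempty (x := (0 : E))).mpr zero_le_one
    exact ⟨(0, ⟨x, hx⟩), by ext1; simp [polarMap]⟩
  · exact ⟨(⟨‖v‖, norm_nonneg v, hv1⟩, ⟨NormedSpace.normalize v, by simpa using hv0⟩),
      Subtype.ext (NormedSpace.norm_smul_normalize v)⟩

theorem not_contractibleSpace_sphere [InnerProductSpace ℝ E] [FiniteDimensional ℝ E] :
    ¬ ContractibleSpace (sphere (0 : E) 1) := by
  intro hcontr
  obtain ⟨x₀⟩ : Nonempty (sphere (0 : E) 1) := inferInstance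
  have : Nontrivial E := ⟨x₀, 0, ne_zero_of_mem_unit_sphere x₀⟩
  obtain ⟨y₀, ⟨H⟩⟩ := id_nullhomotopic (sphere (0 : E) 1)
  let f : C(I × sphere (0 : E) 1, sphere (0 : E) 1) :=
    H.toContinuousMap.comp ⟨fun p => (unitInterval.symm p.1, p.2), by fun_prop⟩
  have hfiber (p q) (h : polarMap E p = polarMap E q) : f p = f q := by
    obtain ⟨t, x⟩ := p
    obtain ⟨s, y⟩ := q
    obtain ⟨rfl, ht | rfl⟩ := polarMap_eq_polarMap h
    · simp only at ht
      simp [f, ht]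
    · rfl
  let r : C(closedBall (0 : E) 1, sphere (0 : E) 1) := isQuotientMap_polarMap.lift f hfiber
  refine not_exists_retraction_closedBall_sphere ⟨r, fun x => ?_⟩
  have hx : inclusion sphere_subset_closedBall x = polarMap E (1, x) :=
    Subtype.ext (one_smul ℝ (x : E)).symm
  calc r (inclusion sphere_subset_closedBall x) = f (1, x) := by
        rw [hx]; exact DFunLike.congr_fun (isQuotientMap_polarMap.lift_comp f hfiber) (1, x)
    _ = x := by simp [f]

end Contractible

section MinCover

theorem minCover_le {P : ℕ → Prop} {k : ℕ} (hk : 1 ≤ k) (h : P k) : minCover P ≤ k :=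
  sInf_le ⟨k, rfl, hk, h⟩

theorem two_le_minCover {P : ℕ → Prop} (h : ¬ P 1) : 2 ≤ minCover P := by
  refine le_sInf ?_
  rintro _ ⟨m, rfl, hm, hP⟩
  have hm1 : m ≠ 1 := by rintro rfl; exact h hP
  exact_mod_cast (show 2 ≤ m by lia)

end MinCover

section Compressible

variable {G X : Type*} [TopologicalSpace X] {act : G → X → X} {A B U V : Set X}

theorem GCompressible.mono (h : GCompressible act A U) (hVU : V ⊆ U)
    (hV : ∀ g x, x ∈ V → act g x ∈ V) : GCompressible act A V := by
  obtain ⟨-, H, hcont, hzero, hequiv, hone⟩ := h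
  exact ⟨hV, H, hcont.mono (prod_mono_left hVU), fun x hx => hzero x (hVU hx),
    fun g x hx => hequiv g x (hVU hx), fun x hx => hone x (hVU hx)⟩

theorem GCompressible.union (hU : IsOpen U) (hV : IsOpen V) (hUV : Disjoint U V)
    (h : GCompressible act A U) (h' : GCompressible act A V) : GCompressible act A (U ∪ V) := by
  classical
  obtain ⟨hinv, H, hcont, hzero, hequiv, hone⟩ := h
  obtain ⟨hinv', H', hcont', hzero', hequiv', hone'⟩ := h'
  let K : X × I → X := fun p => if p.1 ∈ U then H p else H' p
  have hKU {x : X} (hx : x ∈ U) (t : I) : K (x, t) = H (x, t) := if_pos hx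
  have hKV {x : X} (hx : x ∈ V) (t : I) : K (x, t) = H' (x, t) :=
    if_neg (hUV.notMem_of_mem_right hx)
  refine ⟨fun g x => .imp (hinv g x) (hinv' g x), K, ?_, ?_, ?_, ?_⟩
  · rw [union_prod]
    exact (hcont.congr fun p hp => hKU hp.1 p.2).union_of_isOpen
      (hcont'.congr fun p hp => hKV hp.1 p.2) (hU.prod isOpen_univ) (hV.prod isOpen_univ)
  · rintro x (hx | hx)
    · rw [hKU hx, hzero x hx]
    · rw [hKV hx, hzero' x hx]
  · rintro g x (hx | hx) t
    · rw [hKU hx, hKU (hinv g x hx), hequiv g x hx]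
    · rw [hKV hx, hKV (hinv' g x hx), hequiv' g x hx]
  · rintro x (hx | hx)
    · exact hKU hx 1 ▸ hone x hx
    · exact hKV hx 1 ▸ hone' x hx

theorem GCompressible.trans (h : GCompressible act A U) (h' : GCompressible act B A) :
    GCompressible act B U := by
  obtain ⟨hinv, H, hcont, hzero, hequiv, hone⟩ := h
  obtain ⟨-, H', hcont', hzero', hequiv', hone'⟩ := h'
  let firstHalf (t : I) : I := projIcc 0 1 zero_le_one (2 * t)
  let secondHalf (t : I) : I := projIcc 0 1 zero_le_one (2 * t - 1)
  have hfirst : Continuous firstHalf := by fun_prop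
  have hsecond : Continuous secondHalf := by fun_prop
  let K : X × I → X := fun p =>
    if (p.2 : ℝ) ≤ 1 / 2 then H (p.1, firstHalf p.2) else H' (H (p.1, 1), secondHalf p.2)
  refine ⟨hinv, K, ?_, fun x hx => ?_, fun g x hx t => ?_, fun x hx => ?_⟩
  · rw [continuousOn_iff_continuous_domRestrict]
    refine Continuous.if_le ?_ ?_ (by fun_prop) continuous_const ?_
    · exact hcont.comp_continuous (by fun_prop) fun p => ⟨p.2.1, mem_univ _⟩
    · refine hcont'.comp_continuous (.prodMk ?_ (by fun_prop)) fun p => ⟨hone _ p.2.1, mem_univ _⟩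
      exact hcont.comp_continuous (by fun_prop) fun p => ⟨p.2.1, mem_univ _⟩
    · intro p hp
      have hfirst1 : firstHalf p.1.2 = 1 := projIcc_of_right_le _ (by linarith)
      have hsecond0 : secondHalf p.1.2 = 0 := projIcc_of_le_left _ (by linarith)
      rw [hfirst1, hsecond0, hzero' _ (hone _ p.2.1)]
  · simp [K, firstHalf, hzero x hx]
  · simp only [K, hequiv g x hx, hequiv' g _ (hone x hx), apply_ite (act g)]
  · have hsecond1 : secondHalf 1 = 1 := projIcc_of_right_le _ (by norm_num)
    have hhalf : ¬ ((1 : I) : ℝ) ≤ 1 / 2 := by norm_num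
    simpa only [K, hhalf, if_false, hsecond1] using hone' _ (hone x hx)

theorem GCompressible.of_joinedIn_fixedSet {x y : X} (h : JoinedIn (fixedSet act) x y) :
    GCompressible act {y} {x} := by
  obtain ⟨γ, hγ⟩ := h
  refine ⟨?_, fun p => γ p.2, by fun_prop, ?_, fun g _ _ t => (hγ t g).symm, fun _ _ => γ.target⟩
  · rintro g _ rfl
    exact γ.source ▸ hγ 0 g
  · rintro _ rfl
    exact γ.source

theorem GCompressible.exists_planner (h : GCompressible act A U) :
    ∃ c : X → C(I, X), ContinuousOn c U ∧ (∀ x ∈ U, c x 0 = x ∧ c x 1 ∈ A) ∧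
      ∀ g, ∀ x ∈ U, ∀ t, c (act g x) t = act g (c x t) := by
  classical
  obtain ⟨hinv, H, hcont, hzero, hequiv, hone⟩ := h
  let c : X → C(I, X) := fun x => if hx : x ∈ U then
      ⟨fun t => H (x, t), hcont.comp_continuous (by fun_prop) fun _ => ⟨hx, mem_univ _⟩⟩
    else .const I x
  have hc {x : X} (hx : x ∈ U) (t : I) : c x t = H (x, t) := by simp [c, hx]
  refine ⟨c, ?_, fun x hx => ?_, fun g x hx t => ?_⟩
  · rw [continuousOn_iff_continuous_domRestrict]
    refine ContinuousMap.continuous_of_continuous_uncurry _ ?_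
    have huncurry : Continuous fun p : U × I => H (p.1, p.2) :=
      hcont.comp_continuous (by fun_prop) fun p => ⟨p.1.2, mem_univ _⟩
    exact huncurry.congr fun p => (hc p.1.2 p.2).symm
  · rw [hc hx, hc hx]
    exact ⟨hzero x hx, hone x hx⟩
  · rw [hc hx, hc (hinv g x hx), hequiv g x hx]

theorem invTCcover_of_gCompressible {e : X} {k : ℕ} (V : Fin k → Set X) (hopen : ∀ i, IsOpen (V i))
    (hcomp : ∀ i, GCompressible act {e} (V i)) (hcov : ∀ x y, ∃ i, x ∈ V i ∧ y ∈ V i) :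
    invTCcover act k := by
  refine ⟨fun i => V i ×ˢ V i, fun i => (hopen i).prod (hopen i), ?_, fun i => ⟨?_, ?_⟩⟩
  · exact eq_univ_of_forall fun p => mem_iUnion.mpr (hcov p.1 p.2)
  · exact fun g₁ g₂ p hp => ⟨(hcomp i).1 g₁ _ hp.1, (hcomp i).1 g₂ _ hp.2⟩
  obtain ⟨c, hc, hend, hequiv⟩ := (hcomp i).exists_planner
  let rev : C(I, I) := ⟨σ, continuous_symm⟩
  refine ⟨fun p => c p.1, fun p => (c p.2).comp rev, hc.comp continuousOn_fst fun p hp => hp.1,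
    rev.continuous_precomp.comp_continuousOn (hc.comp continuousOn_snd fun p hp => hp.2),
    fun p hp => ⟨(hend _ hp.1).1, ?_, ?_⟩,
    fun g₁ g₂ p hp t => ⟨hequiv g₁ _ hp.1 t, hequiv g₂ _ hp.2 (σ t)⟩⟩
  · simpa [rev] using (hend _ hp.2).1
  · simp [rev, mem_singleton_iff.mp (hend _ hp.1).2, mem_singleton_iff.mp (hend _ hp.2).2]

end Compressible

section FixedSet

variable {G X : Type*} {act : G → X → X}

theorem orbit_eq_singleton [Nonempty G] {x : X} (hx : x ∈ fixedSet act) : orbit act x = {x} := by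
  ext y
  simp [orbit, hx _, eq_comm]

variable [TopologicalSpace X]

theorem exists_continuous_sections_of_invTCcover_one (h : invTCcover act 1) :
    ∃ s₁ s₂ : X × X → C(I, X), Continuous s₁ ∧ Continuous s₂ ∧
      (∀ p, s₁ p 0 = p.1 ∧ s₂ p 1 = p.2 ∧ orbit act (s₁ p 1) = orbit act (s₂ p 0)) ∧
      ∀ g₁ g₂ p t, s₁ (act g₁ p.1, act g₂ p.2) t = act g₁ (s₁ p t) ∧
        s₂ (act g₁ p.1, act g₂ p.2) t = act g₂ (s₂ p t) := by
  obtain ⟨U, -, hU, hsec⟩ := h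
  obtain ⟨-, s₁, s₂, hs₁, hs₂, hend, hequiv⟩ := hsec 0
  have hU0 : U 0 = univ := (iSup_unique (f := U)).symm.trans hU
  simp only [hU0, continuousOn_univ, mem_univ, true_implies] at hs₁ hs₂ hend hequiv
  exact ⟨s₁, s₂, hs₁, hs₂, hend, hequiv⟩

theorem contractibleSpace_fixedSet_of_invTCcover_one [Nonempty G] (hne : (fixedSet act).Nonempty)
    (h : invTCcover act 1) : ContractibleSpace (fixedSet act) := by
  obtain ⟨s₁, s₂, hs₁, hs₂, hend, hequiv⟩ := exists_continuous_sections_of_invTCcover_one h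
  obtain ⟨e, he⟩ := hne
  have hmem₁ (x : fixedSet act) (t : I) : s₁ (x, e) t ∈ fixedSet act := fun g => by
    simpa only [x.2 g, he g] using (hequiv g g (x, e) t).1.symm
  have hmem₂ (x : fixedSet act) (t : I) : s₂ (x, e) t ∈ fixedSet act := fun g => by
    simpa only [x.2 g, he g] using (hequiv g g (x, e) t).2.symm
  have hmid (x : fixedSet act) : s₁ (x, e) 1 = s₂ (x, e) 0 := by
    have horbit := (hend (x, e)).2.2
    rwa [orbit_eq_singleton (hmem₁ x 1), orbit_eq_singleton (hmem₂ x 0),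
      singleton_eq_singleton_iff] at horbit
  let K₁ : C(I × fixedSet act, fixedSet act) :=
    ⟨fun p => ⟨s₁ (p.2, e) p.1, hmem₁ p.2 p.1⟩, by fun_prop⟩
  let K₂ : C(I × fixedSet act, fixedSet act) :=
    ⟨fun p => ⟨s₂ (p.2, e) p.1, hmem₂ p.2 p.1⟩, by fun_prop⟩
  let mid : C(fixedSet act, fixedSet act) := K₁.comp ⟨fun x => (1, x), by fun_prop⟩
  have hidMid : (ContinuousMap.id (fixedSet act)).Homotopic mid :=
    ⟨⟨K₁, fun x => Subtype.ext (hend (x, e)).1, fun _ => rfl⟩⟩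
  have hmidConst : mid.Homotopic (.const _ ⟨e, he⟩) :=
    ⟨⟨K₂, fun x => Subtype.ext (hmid x).symm, fun x => Subtype.ext (hend (x, e)).2.1⟩⟩
  exact (contractible_iff_id_nullhomotopic _).mpr ⟨⟨e, he⟩, hidMid.trans hmidConst⟩

end FixedSet

section LinearSphere

variable {G E : Type*} [NormedAddCommGroup E]

section Normed

variable [NormedSpace ℝ E]

/-- The radial projection of `E` onto its unit sphere, taking the value `y₀` at the origin. -/
noncomputable def radialProj (y₀ : sphere (0 : E) 1) (v : E) : sphere (0 : E) 1 :=
  open Classical in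
  if hv : v = 0 then y₀ else ⟨NormedSpace.normalize v, by simpa using hv⟩

theorem coe_radialProj (y₀ : sphere (0 : E) 1) {v : E} (hv : v ≠ 0) :
    (radialProj y₀ v : E) = NormedSpace.normalize v := by
  simp [radialProj, hv]

theorem radialProj_coe (y₀ x : sphere (0 : E) 1) : radialProj y₀ x = x := by
  ext1
  rw [coe_radialProj y₀ (ne_zero_of_mem_unit_sphere x),
    NormedSpace.normalize_eq_self_of_norm_eq_one (norm_eq_of_mem_sphere x)]

theorem continuousOn_radialProj (y₀ : sphere (0 : E) 1) : ContinuousOn (radialProj y₀) {0}ᶜ := by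
  have hnormalize : ContinuousOn (NormedSpace.normalize : E → E) {0}ᶜ :=
    (continuousOn_id.norm.inv₀ fun _ => norm_ne_zero_iff.mpr).smul continuousOn_id
  rw [IsInducing.subtypeVal.continuousOn_iff]
  exact hnormalize.congr fun v hv => coe_radialProj y₀ hv

theorem lineMap_ne_zero_of_norm_eq {x y : E} (hnorm : ‖x‖ = ‖y‖) (hne : x ≠ -y) (t : ℝ) :
    AffineMap.lineMap x y t ≠ 0 := by
  intro hzero
  rw [AffineMap.lineMap_apply_module] at hzero
  have hsmul : (1 - t) • x = t • -y := by rw [smul_neg]; exact eq_neg_of_add_eq_zero_left hzero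
  have hx : ‖x‖ ≠ 0 := fun hx => hne <| by
    rw [norm_eq_zero.mp hx, norm_eq_zero.mp (hnorm.symm.trans hx), neg_zero]
  have habs : |1 - t| = |t| := by
    have hnorm_smul := congrArg norm hsmul
    rw [norm_smul, norm_smul, norm_neg, ← hnorm] at hnorm_smul
    exact mul_right_cancel₀ hx hnorm_smul
  have ht : t = 1 / 2 := by rcases abs_eq_abs.mp habs with h | h <;> linarith
  refine hne (smul_right_injective E (show t ≠ 0 by norm_num [ht]) ?_)
  simpa only [show 1 - t = t by linarith] using hsmul

variable (ρ : G → E →ₗᵢ[ℝ] E)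

/-- The action on the unit sphere of `E` of a family of linear isometries of `E`. -/
def isometrySphereAct (g : G) (x : sphere (0 : E) 1) : sphere (0 : E) 1 :=
  ⟨ρ g x, by simp⟩

variable {ρ} {e x : sphere (0 : E) 1}

theorem mem_fixedSet_isometrySphereAct :
    x ∈ fixedSet (isometrySphereAct ρ) ↔ ∀ g, ρ g x = x := by
  simp [fixedSet, isometrySphereAct, Subtype.ext_iff]

theorem neg_mem_fixedSet (hx : x ∈ fixedSet (isometrySphereAct ρ)) :
    -x ∈ fixedSet (isometrySphereAct ρ) := by
  rw [mem_fixedSet_isometrySphereAct] at hx ⊢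
  simp [hx]

theorem dist_isometrySphereAct (he : e ∈ fixedSet (isometrySphereAct ρ)) (g : G) :
    dist (isometrySphereAct ρ g x) e = dist x e := by
  conv_lhs => rw [← he g]
  exact (ρ g).dist_map _ _

theorem isometrySphereAct_radialProj (he : e ∈ fixedSet (isometrySphereAct ρ)) (g : G) (v : E) :
    radialProj e (ρ g v) = isometrySphereAct ρ g (radialProj e v) := by
  obtain rfl | hv := eq_or_ne v 0
  · simp [radialProj, he g]
  · ext1
    have hgv : ρ g v ≠ 0 := (map_ne_zero_iff (ρ g) (ρ g).injective).mpr hv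
    simp [isometrySphereAct, coe_radialProj, hv, hgv, NormedSpace.normalize]

theorem gCompressible_compl_neg (he : e ∈ fixedSet (isometrySphereAct ρ)) :
    GCompressible (isometrySphereAct ρ) {e} {-e}ᶜ := by
  have hne {x : sphere (0 : E) 1} (hx : x ∈ ({-e}ᶜ : Set _)) (t : ℝ) :
      AffineMap.lineMap (x : E) (e : E) t ≠ 0 :=
    lineMap_ne_zero_of_norm_eq (by simp) (fun h => hx (Subtype.ext h)) t
  refine ⟨fun g x hx => ?_,
    fun p => radialProj e (AffineMap.lineMap (p.1 : E) (e : E) (p.2 : ℝ)), ?_, ?_, ?_, ?_⟩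
  · rw [mem_compl_singleton_iff, ← dist_ne_zero] at hx ⊢
    rwa [dist_isometrySphereAct (neg_mem_fixedSet he)]
  · refine (continuousOn_radialProj e).comp (Continuous.continuousOn ?_) fun p hp => hne hp.1 p.2
    simp only [AffineMap.lineMap_apply_module]
    fun_prop
  · simp [radialProj_coe]
  · intro g x _ t
    rw [← isometrySphereAct_radialProj he]
    have heg := mem_fixedSet_isometrySphereAct.mp he g
    simp [AffineMap.lineMap_apply_module, isometrySphereAct, heg]
  · simp [radialProj_coe]

theorem gCompressible_compl_self (h : JoinedIn (fixedSet (isometrySphereAct ρ)) (-e) e) :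
    GCompressible (isometrySphereAct ρ) {e} {e}ᶜ := by
  simpa only [neg_neg] using
    (gCompressible_compl_neg h.source_mem).trans (.of_joinedIn_fixedSet h)

theorem dist_neg_self_unitSphere (e : sphere (0 : E) 1) : dist (-e) e = 2 := by
  rw [Subtype.dist_eq, coe_neg_sphere, dist_eq_norm, ← neg_add', norm_neg, ← two_smul ℝ (e : E),
    norm_smul, norm_eq_of_mem_sphere, Real.norm_two, mul_one]

theorem gCompressible_ball_union_ball_neg
    (h : JoinedIn (fixedSet (isometrySphereAct ρ)) (-e) e) :
    GCompressible (isometrySphereAct ρ) {e} (ball e 1 ∪ ball (-e) 1) := by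
  have hdist : dist (-e) e = 2 := dist_neg_self_unitSphere e
  have hinv {y : sphere (0 : E) 1} (hy : y ∈ fixedSet (isometrySphereAct ρ)) (g : G)
      (x : sphere (0 : E) 1) (hx : x ∈ ball y 1) : isometrySphereAct ρ g x ∈ ball y 1 := by
    rwa [mem_ball, dist_isometrySphereAct hy]
  refine .union isOpen_ball isOpen_ball (ball_disjoint_ball ?_)
    ((gCompressible_compl_neg h.target_mem).mono ?_ (hinv h.target_mem))
    ((gCompressible_compl_self h).mono ?_ (hinv h.source_mem))
  · rw [dist_comm, hdist]; norm_num
  · rintro _ hx rfl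
    rw [mem_ball, hdist] at hx
    norm_num at hx
  · rintro _ hx rfl
    rw [mem_ball, dist_comm, hdist] at hx
    norm_num at hx

theorem invTCcover_three_of_joinedIn_neg (h : JoinedIn (fixedSet (isometrySphereAct ρ)) (-e) e) :
    invTCcover (isometrySphereAct ρ) 3 := by
  refine invTCcover_of_gCompressible ![{-e}ᶜ, {e}ᶜ, ball e 1 ∪ ball (-e) 1]
    (e := e) (fun i => ?_) (fun i => ?_) fun x y => ?_
  · fin_cases i
    exacts [isOpen_compl_singleton, isOpen_compl_singleton, isOpen_ball.union isOpen_ball]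
  · fin_cases i
    exacts [gCompressible_compl_neg h.target_mem, gCompressible_compl_self h,
      gCompressible_ball_union_ball_neg h]
  · by_cases hneg : x ≠ -e ∧ y ≠ -e
    · exact ⟨0, hneg⟩
    by_cases hself : x ≠ e ∧ y ≠ e
    · exact ⟨1, hself⟩
    have hne : -e ≠ e := dist_ne_zero.mp (by rw [dist_neg_self_unitSphere]; norm_num)
    have hpoles : (x = e ∨ x = -e) ∧ (y = e ∨ y = -e) := by grind
    have hmem {z : sphere (0 : E) 1} : z = e ∨ z = -e → z ∈ ball e 1 ∪ ball (-e) 1 := by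
      rintro (rfl | rfl)
      exacts [.inl (mem_ball_self one_pos), .inr (mem_ball_self one_pos)]
    exact ⟨2, hmem hpoles.1, hmem hpoles.2⟩

variable (ρ)

/-- The subspace of vectors fixed by every isometry of the family `ρ`. -/
def fixedSubmodule : Submodule ℝ E :=
  ⨅ g, LinearMap.eqLocus (ρ g).toLinearMap LinearMap.id

theorem mem_fixedSubmodule {v : E} : v ∈ fixedSubmodule ρ ↔ ∀ g, ρ g v = v := by
  simp [fixedSubmodule]

/-- The fixed points on the unit sphere form the unit sphere of the subspace of fixed vectors. -/
def fixedSetHomeomorphSphere :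
    fixedSet (isometrySphereAct ρ) ≃ₜ sphere (0 : fixedSubmodule ρ) 1 where
  toFun x := ⟨⟨x.1, (mem_fixedSubmodule ρ).mpr (mem_fixedSet_isometrySphereAct.mp x.2)⟩,
    mem_sphere_zero_iff_norm.mpr (norm_eq_of_mem_sphere x.1)⟩
  invFun v := ⟨⟨v.1.1, mem_sphere_zero_iff_norm.mpr (norm_eq_of_mem_sphere v)⟩,
    mem_fixedSet_isometrySphereAct.mpr ((mem_fixedSubmodule ρ).mp v.1.2)⟩
  left_inv _ := rfl
  right_inv _ := rfl
  continuous_toFun := by fun_prop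
  continuous_invFun := by fun_prop

end Normed

variable [Nonempty G] [InnerProductSpace ℝ E] (ρ : G → E →ₗᵢ[ℝ] E)
  [FiniteDimensional ℝ (fixedSubmodule ρ)]

theorem not_invTCcover_one (hfix : (fixedSet (isometrySphereAct ρ)).Nonempty) :
    ¬ invTCcover (isometrySphereAct ρ) 1 := by
  intro hcover
  have := contractibleSpace_fixedSet_of_invTCcover_one hfix hcover
  exact not_contractibleSpace_sphere (fixedSetHomeomorphSphere ρ).symm.contractibleSpace

end LinearSphere

end PaperTC

theorem invTC_linear_sphere_between_two_and_three_general {G E : Type*} [Nonempty G]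
    [NormedAddCommGroup E] [InnerProductSpace ℝ E] (ρ : G → E →ₗᵢ[ℝ] E)
    [FiniteDimensional ℝ (fixedSubmodule ρ)]
    (hconn : IsPathConnected (fixedSet (isometrySphereAct ρ))) :
    2 ≤ invTC (isometrySphereAct ρ) ∧ invTC (isometrySphereAct ρ) ≤ 3 := by
  obtain ⟨e, he⟩ := hconn.nonempty
  have hjoined := hconn.joinedIn (-e) (neg_mem_fixedSet he) e he
  exact ⟨two_le_minCover (not_invTCcover_one ρ ⟨e, he⟩),
    minCover_le (by norm_num) (invTCcover_three_of_joinedIn_neg hjoined)⟩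

/-- If a finite group `G` acts linearly on a `G`-connected sphere `S^n` with
non-empty fixed point set, then `2 ≤ TC^G(S^n) ≤ 3`. -/
theorem invTC_linear_sphere_between_two_and_three {G : Type*} [Group G] [Finite G]
    (n : ℕ) (hn : 1 ≤ n)
    (ρ : G →* (EuclideanSpace ℝ (Fin (n + 1)) ≃ₗᵢ[ℝ] EuclideanSpace ℝ (Fin (n + 1))))
    (hconn : ∀ H : Subgroup G, IsPathConnected (fixedSetOf (sphereAct ρ) (H : Set G)))
    (hfix : (fixedSet (sphereAct ρ)).Nonempty) :
    2 ≤ invTC (sphereAct ρ) ∧ invTC (sphereAct ρ) ≤ 3 := by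
  have hconn' := hconn ⊤
  simp only [fixedSetOf, Subgroup.coe_top, mem_univ, true_implies] at hconn'
  exact invTC_linear_sphere_between_two_and_three_general (fun g => (ρ g).toLinearIsometry) hconn'
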